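/- Let ω and φ be as in the context. Then φ is nonincreasing on [0,1], and there exists a constant δ₁ > 0 (depending only on n and the constants bounding μ) such that φ(x) ≥ φ(0)/2 for all x ∈ [0, δ₁] and φ(x) ≤ φ(1)/2 for all x ∈ [1−δ₁, 1]. In particular, the unique zero s₁ of φ satisfies δ₁ < s₁ < 1 − δ₁. -/

import Mathlib

open MeasureTheory Set Filter Topology RealInnerProductSpace

noncomputable section

/-- The point `(x, y) ∈ ℝ × ℝ^m ≅ ℝ^{m+1}`. -/
def mkPt (m : ℕ) (x : ℝ) (y : EuclideanSpace ℝ (Fin m)) : EuclideanSpace ℝ (Fin (m+1)) :=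
  (EuclideanSpace.equiv (Fin (m+1)) ℝ).symm (Fin.cons x ((EuclideanSpace.equiv (Fin m) ℝ) y))

/-- The cross-section `Ω(s) = {y : (s, y) ∈ Ω}`. -/
def cross {m : ℕ} (Ω : Set (EuclideanSpace ℝ (Fin (m+1)))) (s : ℝ) :
    Set (EuclideanSpace ℝ (Fin m)) := {y | mkPt m s y ∈ Ω}

/-- `ω(s)`: the (n-1)-dimensional volume of the cross-section `Ω(s)`. -/
def ωvol {m : ℕ} (Ω : Set (EuclideanSpace ℝ (Fin (m+1)))) (s : ℝ) : ℝ :=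
  (volume (cross Ω s)).toReal

/-- The Laplacian, as the sum of the pure second derivatives along the standard basis. -/
def lap {k : ℕ} (u : EuclideanSpace ℝ (Fin k) → ℝ) (p : EuclideanSpace ℝ (Fin k)) : ℝ :=
  ∑ i, fderiv ℝ (fun q => fderiv ℝ u q (EuclideanSpace.single i 1)) p (EuclideanSpace.single i 1)

/-- The cross-sectional average `ū(x)` of `u`. -/
def ubarFn {m : ℕ} (Ω : Set (EuclideanSpace ℝ (Fin (m+1))))
    (u : EuclideanSpace ℝ (Fin (m+1)) → ℝ) (x : ℝ) : ℝ :=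
  (∫ y in cross Ω x, u (mkPt m x y)) / ωvol Ω x

/-- `(φ, φd)` is a (nonzero, C¹ on [0,1]) solution of the Neumann problem
`-(ω φ')' = μ ω φ` on (0,1), with `φ'(0) = φ'(1) = 0`. -/
def NeumannSol (ω : ℝ → ℝ) (μ : ℝ) (φ φd : ℝ → ℝ) : Prop :=
  (∀ x ∈ Icc (0:ℝ) 1, HasDerivWithinAt φ (φd x) (Icc 0 1) x) ∧
  ContinuousOn φd (Icc 0 1) ∧ φd 0 = 0 ∧ φd 1 = 0 ∧
  (∃ x ∈ Icc (0:ℝ) 1, φ x ≠ 0) ∧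
  ∀ x ∈ Ioo (0:ℝ) 1, HasDerivAt (fun t => ω t * φd t) (-(μ * ω x * φ x)) x

/-- `μ` is a Neumann eigenvalue of `-(ω φ')' = μ ω φ`. -/
def IsNeumannEigenvalue (ω : ℝ → ℝ) (μ : ℝ) : Prop := ∃ φ φd, NeumannSol ω μ φ φd

structure Wt (m : ℕ) (ω : ℝ → ℝ) : Prop where
  pos : ∀ x ∈ Ioo (0:ℝ) 1, 0 < ω x
  cp : ∀ x ∈ Ioo (0:ℝ) 1, ∀ t ∈ Ioo (0:ℝ) 1, ∀ θ : ℝ, 0 ≤ θ → θ < 1 →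
    (1 - θ) ^ m * ω x ≤ ω ((1 - θ) * x + θ * t)

theorem Wt.refl {m : ℕ} {ω : ℝ → ℝ} (h : Wt m ω) : Wt m (fun x => ω (1 - x)) := by
  refine ⟨fun x hx => h.pos _ ⟨by linarith [hx.2], by linarith [hx.1]⟩, ?_⟩
  intro x hx t ht θ h0 h1
  have := h.cp (1 - x) ⟨by linarith [hx.2], by linarith [hx.1]⟩ (1 - t)
    ⟨by linarith [ht.2], by linarith [ht.1]⟩ θ h0 h1
  convert this using 2
  ring

/-- The comparison constant. -/
def CT (m : ℕ) (T : ℝ) : ℝ := (2 / (1 - T)) ^ m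

theorem CT_pos (m : ℕ) {T : ℝ} (hT : T < 1) : 0 < CT m T := by
  unfold CT
  have : 0 < 1 - T := by linarith
  positivity

theorem Wt.bd {m : ℕ} {ω : ℝ → ℝ} (h : Wt m ω) {r s T : ℝ} (hr : 0 < r) (hrs : r ≤ s)
    (hsT : s ≤ T) (hT : T < 1) : ω r ≤ CT m T * ω s := by
  set t := (T + 1) / 2 with ht
  have htr : 0 < t - r := by linarith
  have hT1 : 0 < 1 - T := by linarith
  have h1 := h.cp r ⟨hr, by linarith⟩ t ⟨by linarith, by linarith⟩ ((s - r) / (t - r))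
    (div_nonneg (by linarith) htr.le) (by rw [div_lt_one htr]; linarith)
  have e1 : (1 - (s - r) / (t - r)) * r + (s - r) / (t - r) * t = s := by
    field_simp; ring
  have e2 : (1 - (s - r) / (t - r)) = (t - s) / (t - r) := by
    field_simp; ring
  rw [e1, e2] at h1
  have h2 : (1 - T) / 2 ≤ (t - s) / (t - r) := by
    rw [div_le_div_iff₀ (by norm_num) htr]
    nlinarith
  have h3 : ((1 - T) / 2) ^ m ≤ ((t - s) / (t - r)) ^ m :=
    pow_le_pow_left₀ (by linarith) h2 m
  have hω := h.pos r ⟨hr, by linarith⟩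
  have h4 : ((1 - T) / 2) ^ m * ω r ≤ ω s := le_trans (mul_le_mul_of_nonneg_right h3 hω.le) h1
  have h5 : CT m T * ((1 - T) / 2) ^ m = 1 := by
    unfold CT
    rw [← mul_pow]
    have : 2 / (1 - T) * ((1 - T) / 2) = 1 := by field_simp
    rw [this, one_pow]
  calc ω r = CT m T * (((1 - T) / 2) ^ m * ω r) := by rw [← mul_assoc, h5, one_mul]
    _ ≤ _ := mul_le_mul_of_nonneg_left h4 (CT_pos m hT).le

theorem Wt.cont {m : ℕ} {ω : ℝ → ℝ} (h : Wt m ω) {x₀ : ℝ} (hx₀ : x₀ ∈ Ioo (0:ℝ) 1) :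
    ContinuousAt ω x₀ := by
  obtain ⟨d, hd, hd0, hd1⟩ : ∃ d > 0, 0 < x₀ - d ∧ x₀ + d < 1 := by
    refine ⟨min x₀ (1 - x₀) / 2, ?_, ?_, ?_⟩
    · have : 0 < min x₀ (1 - x₀) := lt_min hx₀.1 (by linarith [hx₀.2])
      linarith
    · have := min_le_left x₀ (1 - x₀)
      linarith [hx₀.1]
    · have := min_le_right x₀ (1 - x₀)
      linarith [hx₀.2]
  have hω := h.pos x₀ hx₀
  have key : ∀ x, |x - x₀| < d → (1 - |x - x₀| / d) ^ m * ω x₀ ≤ ω x ∧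
      ω x ≤ ω x₀ / (1 - |x - x₀| / (d + |x - x₀|)) ^ m := by
    intro x hx
    have hxx := abs_lt.1 hx
    have hxI : x ∈ Ioo (0:ℝ) 1 := ⟨by linarith, by linarith⟩
    have ha := abs_nonneg (x - x₀)
    have hda : 0 < d + |x - x₀| := by linarith
    have hlt : |x - x₀| / (d + |x - x₀|) < 1 := by rw [div_lt_one hda]; linarith
    constructor
    · rcases le_total x₀ x with hc | hc
      · have := h.cp x₀ hx₀ (x₀ + d) ⟨by linarith, by linarith⟩ (|x - x₀| / d) (by positivity)
          (by rwa [div_lt_one hd])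
        convert this using 2
        rw [abs_of_nonneg (by linarith)]; field_simp; ring
      · have := h.cp x₀ hx₀ (x₀ - d) ⟨by linarith, by linarith⟩ (|x - x₀| / d) (by positivity)
          (by rwa [div_lt_one hd])
        convert this using 2
        rw [abs_of_nonpos (by linarith)]; field_simp; ring
    · rw [le_div_iff₀ (pow_pos (by linarith) m), mul_comm]
      rcases le_total x₀ x with hc | hc
      · have := h.cp x hxI (x₀ - d) ⟨by linarith, by linarith⟩ (|x - x₀| / (d + |x - x₀|))
          (by positivity) hlt
        have e : (1 - |x - x₀| / (d + |x - x₀|)) * x + |x - x₀| / (d + |x - x₀|) * (x₀ - d)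
            = x₀ := by
          rw [abs_of_nonneg (by linarith)] at hda ⊢; field_simp; ring
        rw [e] at this
        exact this
      · have := h.cp x hxI (x₀ + d) ⟨by linarith, by linarith⟩ (|x - x₀| / (d + |x - x₀|))
          (by positivity) hlt
        have e : (1 - |x - x₀| / (d + |x - x₀|)) * x + |x - x₀| / (d + |x - x₀|) * (x₀ + d)
            = x₀ := by
          rw [abs_of_nonpos (by linarith)] at hda ⊢; field_simp; ring
        rw [e] at this
        exact this
  have hev : ∀ᶠ x in 𝓝 x₀, |x - x₀| < d := by
    have := Metric.ball_mem_nhds x₀ hd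
    filter_upwards [this] with x hx
    simpa [Real.dist_eq] using hx
  have t1 : Tendsto (fun x => (1 - |x - x₀| / d) ^ m * ω x₀) (𝓝 x₀) (𝓝 (ω x₀)) := by
    have : ContinuousAt (fun x => (1 - |x - x₀| / d) ^ m * ω x₀) x₀ := by fun_prop
    simpa [ContinuousAt] using this
  have t2 : Tendsto (fun x => ω x₀ / (1 - |x - x₀| / (d + |x - x₀|)) ^ m) (𝓝 x₀) (𝓝 (ω x₀)) := by
    have : ContinuousAt (fun x => ω x₀ / (1 - |x - x₀| / (d + |x - x₀|)) ^ m) x₀ := by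
      have h1 : d + |x₀ - x₀| ≠ 0 := by simp [hd.ne']
      have h2 : (1 - |x₀ - x₀| / (d + |x₀ - x₀|)) ^ m ≠ 0 := by simp
      fun_prop (disch := assumption)
    simpa [ContinuousAt] using this
  exact tendsto_of_tendsto_of_tendsto_of_le_of_le' t1 t2
    (hev.mono fun x hx => (key x hx).1) (hev.mono fun x hx => (key x hx).2)

section ops

variable {m : ℕ} {ω : ℝ → ℝ} {T : ℝ}

theorem Wt.contOn (h : Wt m ω) : ContinuousOn ω (Ioo 0 1) :=
  fun _ hx => (h.cont hx).continuousWithinAt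

theorem Wt.intOn (h : Wt m ω) (hT : T < 1) {f : ℝ → ℝ}
    (hf : ContinuousOn f (Icc 0 T)) : IntegrableOn (fun x => ω x * f x) (Ioc 0 T) := by
  obtain ⟨M, hM⟩ := isCompact_Icc.exists_bound_of_continuousOn hf
  have hs : Ioc 0 T ⊆ Ioo 0 1 := fun x hx => ⟨hx.1, by linarith [hx.2]⟩
  have hme : AEStronglyMeasurable (fun x => ω x * f x) (volume.restrict (Ioc 0 T)) :=
    ((h.contOn.mono hs).mul (hf.mono Ioc_subset_Icc_self)).aestronglyMeasurable measurableSet_Ioc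
  refine ⟨hme, ?_⟩
  have : IsFiniteMeasure (volume.restrict (Ioc 0 T)) := by
    refine ⟨by simp⟩
  refine HasFiniteIntegral.of_bounded (C := CT m T * ω T * M) ?_
  rw [ae_restrict_iff' measurableSet_Ioc]
  refine Eventually.of_forall fun x hx => ?_
  have h1 := h.bd hx.1 hx.2 le_rfl hT
  have h2 := hM x ⟨hx.1.le, hx.2⟩
  have h3 := h.pos x (hs hx)
  rw [norm_mul, Real.norm_of_nonneg h3.le]
  have : 0 ≤ CT m T * ω T := h3.le.trans h1
  exact mul_le_mul h1 h2 (norm_nonneg _) this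

theorem Wt.ii (h : Wt m ω) (hT : T < 1) {f : ℝ → ℝ}
    (hf : ContinuousOn f (Icc 0 T)) {x : ℝ} (hx : x ∈ Icc 0 T) :
    IntervalIntegrable (fun x => ω x * f x) volume 0 x := by
  rw [intervalIntegrable_iff_integrableOn_Ioc_of_le hx.1]
  exact (h.intOn hT hf).mono_set (Ioc_subset_Ioc_right hx.2)

/-- primitive -/
def Bop (ω f : ℝ → ℝ) (x : ℝ) : ℝ := ∫ r in (0:ℝ)..x, ω r * f r

/-- averaged primitive -/
def Aop (ω f : ℝ → ℝ) (x : ℝ) : ℝ := Bop ω f x / ω x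

/-- Volterra operator -/
def Kop (ω f : ℝ → ℝ) (x : ℝ) : ℝ := ∫ r in (0:ℝ)..x, Aop ω f r

theorem Bop_zero (ω f : ℝ → ℝ) : Bop ω f 0 = 0 := by simp [Bop]
theorem Aop_zero (ω f : ℝ → ℝ) : Aop ω f 0 = 0 := by simp [Aop, Bop_zero]
theorem Kop_zero (ω f : ℝ → ℝ) : Kop ω f 0 = 0 := by simp [Kop]

theorem Bop_deriv (h : Wt m ω) (hT : T < 1) {f : ℝ → ℝ}
    (hf : ContinuousOn f (Icc 0 T)) {x : ℝ} (hx : x ∈ Ioo 0 T) :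
    HasDerivAt (Bop ω f) (ω x * f x) x := by
  have hnb : Icc 0 T ∈ 𝓝 x := Icc_mem_nhds hx.1 hx.2
  have hs : ContinuousOn (fun x => ω x * f x) (Ioo 0 T) :=
    (h.contOn.mono (Ioo_subset_Ioo_right hT.le)).mul (hf.mono Ioo_subset_Icc_self)
  exact intervalIntegral.integral_hasDerivAt_right
    (h.ii hT hf ⟨hx.1.le, hx.2.le⟩)
    (hs.stronglyMeasurableAtFilter isOpen_Ioo x hx)
    ((h.cont ⟨hx.1, by linarith [hx.2]⟩).mul (hf.continuousAt hnb))

theorem Bop_cont (h : Wt m ω) (hT0 : 0 ≤ T) (hT : T < 1) {f : ℝ → ℝ}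
    (hf : ContinuousOn f (Icc 0 T)) : ContinuousOn (Bop ω f) (Icc 0 T) := by
  have := intervalIntegral.continuousOn_primitive_interval (a := 0) (b := T) (μ := volume)
    (f := fun x => ω x * f x) (by
      rw [uIcc_of_le hT0, integrableOn_Icc_iff_integrableOn_Ioc]; exact h.intOn hT hf)
  rwa [uIcc_of_le hT0] at this

theorem Bop_bound (h : Wt m ω) (hT : T < 1) {f : ℝ → ℝ} {M : ℝ} {k : ℕ} (hM : 0 ≤ M)
    (hb : ∀ r ∈ Icc 0 T, |f r| ≤ M * r ^ k) {x : ℝ} (hx : x ∈ Ioc 0 T) :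
    |Bop ω f x| ≤ CT m T * ω x * M * x ^ k * x := by
  have := intervalIntegral.norm_integral_le_of_norm_le_const (a := 0) (b := x)
    (C := CT m T * ω x * M * x ^ k) (f := fun x => ω x * f x) (by
      intro r hr
      rw [uIoc_of_le hx.1.le] at hr
      have h1 := h.bd hr.1 hr.2 hx.2 hT
      have h2 := hb r ⟨hr.1.le, hr.2.trans hx.2⟩
      have h3 := h.pos r ⟨hr.1, by linarith [hr.2, hx.2]⟩
      have h4 : M * r ^ k ≤ M * x ^ k :=
        mul_le_mul_of_nonneg_left (pow_le_pow_left₀ hr.1.le hr.2 k) hM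
      rw [norm_mul, Real.norm_of_nonneg h3.le, Real.norm_eq_abs, mul_assoc (CT m T * ω x)]
      exact mul_le_mul h1 (h2.trans h4) (abs_nonneg _) (h3.le.trans h1))
  rw [sub_zero, abs_of_pos hx.1] at this
  exact this

theorem Aop_bound (h : Wt m ω) (hT : T < 1) {f : ℝ → ℝ} {M : ℝ} {k : ℕ} (hM : 0 ≤ M)
    (hb : ∀ r ∈ Icc 0 T, |f r| ≤ M * r ^ k) {x : ℝ} (hx : x ∈ Icc 0 T) :
    |Aop ω f x| ≤ CT m T * M * x ^ k * x := by
  rcases hx.1.eq_or_lt with h0 | h0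
  · rw [← h0, Aop_zero]; simp
  · have hω := h.pos x ⟨h0, by linarith [hx.2]⟩
    rw [Aop, abs_div, abs_of_pos hω, div_le_iff₀ hω]
    have := Bop_bound h hT hM hb ⟨h0, hx.2⟩
    linarith

theorem Aop_cont (h : Wt m ω) (hT0 : 0 ≤ T) (hT : T < 1) {f : ℝ → ℝ}
    (hf : ContinuousOn f (Icc 0 T)) : ContinuousOn (Aop ω f) (Icc 0 T) := by
  intro x hx
  rcases hx.1.eq_or_lt with h0 | h0
  · subst h0
    obtain ⟨M, hM⟩ := isCompact_Icc.exists_bound_of_continuousOn hf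
    have hM0 : 0 ≤ M := (norm_nonneg _).trans (hM 0 hx)
    have hb : ∀ r ∈ Icc 0 T, |f r| ≤ M * r ^ 0 := fun r hr => by simpa using hM r hr
    have : ∀ x ∈ Icc 0 T, |Aop ω f x| ≤ CT m T * M * x := fun x hx => by
      simpa using Aop_bound h hT hM0 hb hx
    rw [ContinuousWithinAt, Aop_zero]
    have t1 : Tendsto (fun x => CT m T * M * x) (𝓝[Icc 0 T] 0) (𝓝 0) := by
      have : ContinuousWithinAt (fun x => CT m T * M * x) (Icc 0 T) 0 := by fun_prop
      simpa [ContinuousWithinAt] using this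
    exact squeeze_zero_norm' (eventually_mem_nhdsWithin.mono fun x hx => this x hx) t1
  · have hω := h.pos x ⟨h0, by linarith [hx.2]⟩
    exact (Bop_cont h hT0 hT hf x hx).div
      (h.cont ⟨h0, by linarith [hx.2]⟩).continuousWithinAt hω.ne'

theorem Aop_ii (h : Wt m ω) (hT : T < 1) {f : ℝ → ℝ}
    (hf : ContinuousOn f (Icc 0 T)) {x : ℝ} (hx : x ∈ Icc 0 T) :
    IntervalIntegrable (Aop ω f) volume 0 x := by
  apply ContinuousOn.intervalIntegrable
  rw [uIcc_of_le hx.1]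
  exact (Aop_cont h (hx.1.trans hx.2) hT hf).mono (Icc_subset_Icc_right hx.2)

theorem Kop_deriv (h : Wt m ω) (hT0 : 0 < T) (hT : T < 1) {f : ℝ → ℝ}
    (hf : ContinuousOn f (Icc 0 T)) {x : ℝ} (hx : x ∈ Icc 0 T) :
    HasDerivWithinAt (Kop ω f) (Aop ω f x) (Icc 0 T) x := by
  have hc := Aop_cont h hT0.le hT hf
  have : Fact (x ∈ Icc 0 T) := ⟨hx⟩
  exact intervalIntegral.integral_hasDerivWithinAt_right (Aop_ii h hT hf hx)
    (hc.stronglyMeasurableAtFilter_nhdsWithin measurableSet_Icc x) (hc x hx)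

theorem Kop_cont (h : Wt m ω) (hT0 : 0 < T) (hT : T < 1) {f : ℝ → ℝ}
    (hf : ContinuousOn f (Icc 0 T)) : ContinuousOn (Kop ω f) (Icc 0 T) :=
  fun _ hx => (Kop_deriv h hT0 hT hf hx).continuousWithinAt

theorem Kop_bound (h : Wt m ω) (hT : T < 1) {f : ℝ → ℝ} {M : ℝ} {k : ℕ} (hM : 0 ≤ M)
    (hb : ∀ r ∈ Icc 0 T, |f r| ≤ M * r ^ k) {x : ℝ} (hx : x ∈ Icc 0 T) :
    |Kop ω f x| ≤ CT m T * M / (k + 1) * x ^ (k + 1) := by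
  have := intervalIntegral.norm_integral_le_of_norm_le (a := 0) (b := x) (μ := volume)
    (f := Aop ω f) (g := fun s => CT m T * M * s ^ k) hx.1 (by
      refine Eventually.of_forall fun s hs => ?_
      have hsT : s ∈ Icc 0 T := ⟨hs.1.le, hs.2.trans hx.2⟩
      refine (Aop_bound h hT hM hb hsT).trans ?_
      have h1 : 0 ≤ CT m T * M * s ^ k :=
        mul_nonneg (mul_nonneg (CT_pos m hT).le hM) (pow_nonneg hsT.1 _)
      nlinarith [hsT.2])
    (Continuous.intervalIntegrable (by fun_prop) _ _)
  rw [intervalIntegral.integral_const_mul, integral_pow] at this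
  refine this.trans (le_of_eq ?_)
  simp
  ring

theorem Kop_sub (h : Wt m ω) (hT : T < 1) {f g : ℝ → ℝ}
    (hf : ContinuousOn f (Icc 0 T)) (hg : ContinuousOn g (Icc 0 T)) {x : ℝ} (hx : x ∈ Icc 0 T) :
    Kop ω (fun r => f r - g r) x = Kop ω f x - Kop ω g x := by
  unfold Kop
  rw [← intervalIntegral.integral_sub (Aop_ii h hT hf hx) (Aop_ii h hT hg hx)]
  apply intervalIntegral.integral_congr
  intro s hs
  rw [uIcc_of_le hx.1] at hs
  have hsT : s ∈ Icc 0 T := ⟨hs.1, hs.2.trans hx.2⟩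
  simp only [Aop, Bop]
  rw [← sub_div, ← intervalIntegral.integral_sub (h.ii hT hf hsT) (h.ii hT hg hsT)]
  simp only [mul_sub]

theorem Kop_smul (c : ℝ) (f : ℝ → ℝ) (x : ℝ) :
    Kop ω (fun r => c * f r) x = c * Kop ω f x := by
  unfold Kop
  rw [← intervalIntegral.integral_const_mul]
  congr 1
  ext s
  simp only [Aop, Bop]
  rw [← mul_div_assoc, ← intervalIntegral.integral_const_mul]
  congr 2
  ext r
  ring

/-- uniqueness -/
theorem Kop_unique (h : Wt m ω) (hT0 : 0 < T) (hT : T < 1) {D : ℝ → ℝ}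
    (hD : ContinuousOn D (Icc 0 T)) (μ : ℝ)
    (he : ∀ x ∈ Icc 0 T, D x = - (μ * Kop ω D x)) : ∀ x ∈ Icc 0 T, D x = 0 := by
  obtain ⟨M, hM⟩ := isCompact_Icc.exists_bound_of_continuousOn hD
  have hM0 : 0 ≤ M := (norm_nonneg _).trans (hM 0 ⟨le_rfl, hT0.le⟩)
  have hC := CT_pos m hT
  have key : ∀ k : ℕ, ∀ x ∈ Icc 0 T, |D x| ≤ M * ((|μ| * CT m T) ^ k / k.factorial) * x ^ k := by
    intro k
    induction k with
    | zero => intro x hx; simpa using hM x hx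
    | succ k ih =>
      intro x hx
      have := Kop_bound h hT (by positivity) ih hx
      rw [he x hx, abs_neg, abs_mul]
      refine (mul_le_mul_of_nonneg_left this (abs_nonneg μ)).trans (le_of_eq ?_)
      rw [Nat.factorial_succ]
      push_cast
      field_simp
      ring
  intro x hx
  have t1 : Tendsto (fun k : ℕ => M * ((|μ| * CT m T * x) ^ k / k.factorial)) atTop (𝓝 (M * 0)) :=
    (FloorSemiring.tendsto_pow_div_factorial_atTop _).const_mul M
  rw [mul_zero] at t1
  have : |D x| ≤ 0 := ge_of_tendsto t1 (Eventually.of_forall fun k => by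
    refine (key k x hx).trans (le_of_eq ?_)
    rw [mul_pow _ x]; ring)
  exact abs_nonpos_iff.1 this

end ops

section ser

variable {m : ℕ} {ω : ℝ → ℝ} {T : ℝ}

/-- iterated kernels -/
def aK (ω : ℝ → ℝ) : ℕ → ℝ → ℝ
  | 0 => fun _ => 1
  | k + 1 => Kop ω (aK ω k)

/-- the solution series -/
def FF (ω : ℝ → ℝ) (l x : ℝ) : ℝ := ∑' k : ℕ, (-l) ^ k * aK ω k x

theorem aK_cont (h : Wt m ω) (hT0 : 0 < T) (hT : T < 1) (k : ℕ) :
    ContinuousOn (aK ω k) (Icc 0 T) := by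
  induction k with
  | zero => exact continuousOn_const
  | succ k ih => exact Kop_cont h hT0 hT ih

theorem aK_bound (h : Wt m ω) (hT : T < 1) (k : ℕ) :
    ∀ x ∈ Icc 0 T, |aK ω k x| ≤ (CT m T) ^ k / k.factorial * x ^ k := by
  have hC := CT_pos m hT
  induction k with
  | zero => intro x hx; simp [aK]
  | succ k ih =>
    intro x hx
    refine (Kop_bound h hT (by positivity) ih hx).trans (le_of_eq ?_)
    rw [Nat.factorial_succ]
    push_cast
    field_simp
    ring

theorem term_bound (h : Wt m ω) (hT : T < 1) {L l : ℝ} (hl : |l| ≤ L) (k : ℕ) {x : ℝ}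
    (hx : x ∈ Icc 0 T) : ‖(-l) ^ k * aK ω k x‖ ≤ (L * CT m T) ^ k / k.factorial := by
  have hC := CT_pos m hT
  have h1 := aK_bound h hT k x hx
  have h2 : x ^ k ≤ 1 := pow_le_one₀ hx.1 (by linarith [hx.2])
  have h3 : |aK ω k x| ≤ (CT m T) ^ k / k.factorial :=
    h1.trans (mul_le_of_le_one_right (by positivity) h2)
  rw [norm_mul, norm_pow, norm_neg, Real.norm_eq_abs, Real.norm_eq_abs, mul_pow, mul_div_assoc]
  have hL : 0 ≤ L := (abs_nonneg l).trans hl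
  exact mul_le_mul (pow_le_pow_left₀ (abs_nonneg _) hl k) h3 (abs_nonneg _) (by positivity)

theorem FF_joint (h : Wt m ω) (hT0 : 0 < T) (hT : T < 1) (L : ℝ) :
    ContinuousOn (fun p : ℝ × ℝ => FF ω p.1 p.2) ({l | |l| ≤ L} ×ˢ Icc 0 T) := by
  refine continuousOn_tsum (u := fun k : ℕ => (L * CT m T) ^ k / k.factorial) ?_
    (Real.summable_pow_div_factorial _) ?_
  · intro k
    refine ContinuousOn.mul (by fun_prop) ?_
    exact (aK_cont h hT0 hT k).comp continuousOn_snd (fun p hp => hp.2)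
  · intro k p hp
    exact term_bound h hT hp.1 k hp.2

theorem FF_cont (h : Wt m ω) (hT0 : 0 < T) (hT : T < 1) (l : ℝ) :
    ContinuousOn (FF ω l) (Icc 0 T) :=
  (FF_joint h hT0 hT |l|).comp (f := fun x => (l, x)) (by fun_prop)
    (fun x hx => ⟨le_refl |l|, hx⟩)

theorem FF_cont_l (h : Wt m ω) (hT0 : 0 < T) (hT : T < 1) {x : ℝ} (hx : x ∈ Icc 0 T) :
    Continuous (fun l => FF ω l x) := by
  rw [continuous_iff_continuousAt]
  intro l
  have h1 : ContinuousOn (fun l => FF ω l x) {l' | |l'| ≤ |l| + 1} :=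
    (FF_joint h hT0 hT (|l| + 1)).comp (f := fun l => (l, x)) (by fun_prop)
      (fun l hl => ⟨hl, hx⟩)
  refine h1.continuousAt ?_
  have : {l' : ℝ | |l'| < |l| + 1} ∈ 𝓝 l :=
    (isOpen_lt (by fun_prop) (by fun_prop)).mem_nhds (by simp)
  exact mem_of_superset this fun y (hy : |y| < |l| + 1) => (hy.le : |y| ≤ |l| + 1)

theorem FF_bound (h : Wt m ω) (hT : T < 1) {L l : ℝ} (hl : |l| ≤ L) {x : ℝ} (hx : x ∈ Icc 0 T) :
    |FF ω l x| ≤ ∑' k : ℕ, (L * CT m T) ^ k / k.factorial :=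
  tsum_of_norm_bounded (Real.summable_pow_div_factorial _).hasSum
    fun k => term_bound h hT hl k hx

theorem FF_l0 (x : ℝ) : FF ω 0 x = 1 := by
  unfold FF
  rw [tsum_eq_single 0]
  · simp [aK]
  · intro k hk; simp [hk]

theorem Kop_psum (h : Wt m ω) (hT0 : 0 < T) (hT : T < 1) (l : ℝ) (n : ℕ) {x : ℝ}
    (hx : x ∈ Icc 0 T) :
    Kop ω (fun r => ∑ k ∈ Finset.range n, (-l) ^ k * aK ω k r) x =
      ∑ k ∈ Finset.range n, (-l) ^ k * aK ω (k + 1) x := by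
  induction n with
  | zero => simp [Kop, Aop, Bop]
  | succ n ih =>
    have hc : ∀ n, ContinuousOn (fun r => ∑ k ∈ Finset.range n, (-l) ^ k * aK ω k r) (Icc 0 T) :=
      fun n => continuousOn_finsetSum _ fun k _ =>
        continuousOn_const.mul (aK_cont h hT0 hT k)
    have h1 := Kop_sub h hT (hc (n + 1)) (hc n) hx
    have e : (fun r => ∑ k ∈ Finset.range (n + 1), (-l) ^ k * aK ω k r -
        ∑ k ∈ Finset.range n, (-l) ^ k * aK ω k r) = fun r => (-l) ^ n * aK ω n r := by
      ext r; rw [Finset.sum_range_succ]; ring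
    rw [e, Kop_smul, ih] at h1
    rw [Finset.sum_range_succ]
    have : Kop ω (aK ω n) x = aK ω (n + 1) x := rfl
    rw [this] at h1
    linarith

theorem FF_eq (h : Wt m ω) (hT0 : 0 < T) (hT : T < 1) (l : ℝ) {x : ℝ}
    (hx : x ∈ Icc 0 T) : FF ω l x = 1 - l * Kop ω (FF ω l) x := by
  set S : ℕ → ℝ → ℝ := fun n r => ∑ k ∈ Finset.range n, (-l) ^ k * aK ω k r with hS
  have hC := CT_pos m hT
  have hSc : ∀ n, ContinuousOn (S n) (Icc 0 T) :=
    fun n => continuousOn_finsetSum _ fun k _ => continuousOn_const.mul (aK_cont h hT0 hT k)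
  have hu : TendstoUniformlyOn S (FF ω l) atTop (Icc 0 T) :=
    tendstoUniformlyOn_tsum_nat (u := fun k : ℕ => (|l| * CT m T) ^ k / k.factorial)
      (Real.summable_pow_div_factorial _) fun k x hx => term_bound h hT le_rfl k hx
  have t1 : Tendsto (fun n => S (n + 1) x) atTop (𝓝 (FF ω l x)) :=
    (tendsto_add_atTop_iff_nat 1).2 (hu.tendsto_at hx)
  have t2 : Tendsto (fun n => Kop ω (S n) x) atTop (𝓝 (Kop ω (FF ω l) x)) := by
    rw [Metric.tendsto_atTop']
    intro ε hε
    rw [Metric.tendstoUniformlyOn_iff] at hu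
    have h2 := hu (ε / (2 * CT m T)) (by positivity)
    obtain ⟨N, hN⟩ := eventually_atTop.1 h2
    refine ⟨N, fun n hn => ?_⟩
    have hb : ∀ r ∈ Icc 0 T, |S n r - FF ω l r| ≤ (ε / (2 * CT m T)) * r ^ 0 := by
      intro r hr
      have := hN n hn.le r hr
      rw [dist_comm, Real.dist_eq] at this
      simpa using this.le
    have h3 := Kop_bound h hT (by positivity) hb hx
    rw [Kop_sub h hT (hSc n) (FF_cont h hT0 hT l) hx] at h3
    rw [Real.dist_eq]
    refine h3.trans_lt ?_
    have : CT m T * (ε / (2 * CT m T)) = ε / 2 := by field_simp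
    rw [this]
    have hx1 : x ≤ 1 := by linarith [hx.2]
    simp
    nlinarith [hx.1]
  have t3 : Tendsto (fun n => 1 - l * Kop ω (S n) x) atTop (𝓝 (1 - l * Kop ω (FF ω l) x)) :=
    (t2.const_mul l).const_sub 1
  refine tendsto_nhds_unique t1 (t3.congr fun n => ?_)
  rw [hS]
  simp only
  rw [Kop_psum h hT0 hT l n hx, Finset.sum_range_succ', Finset.mul_sum]
  simp only [pow_zero, aK, mul_one]
  rw [sub_eq_add_neg, ← Finset.sum_neg_distrib, add_comm]
  congr 1
  apply Finset.sum_congr rfl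
  intro k _
  ring

theorem FF_zero (h : Wt m ω) (l : ℝ) : FF ω l 0 = 1 := by
  have := FF_eq h (T := 1/2) (by norm_num) (by norm_num) l (x := 0) ⟨le_rfl, by norm_num⟩
  rw [this, Kop_zero]; ring

theorem FF_deriv (h : Wt m ω) (hT0 : 0 < T) (hT : T < 1) (l : ℝ) {x : ℝ} (hx : x ∈ Icc 0 T) :
    HasDerivWithinAt (FF ω l) (-l * Aop ω (FF ω l) x) (Icc 0 T) x := by
  have h1 := ((Kop_deriv h hT0 hT (FF_cont h hT0 hT l) hx).const_mul l).const_sub 1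
  refine (h1.congr (fun y hy => FF_eq h hT0 hT l hy) (FF_eq h hT0 hT l hx)).congr_deriv ?_
  ring

theorem par_cont (h : Wt m ω) (hT0 : 0 < T) (hT : T < 1) {k : ℝ → ℝ}
    (hk : ContinuousOn k (Icc 0 T)) {t : ℝ} (ht : t ∈ Icc 0 T) :
    Continuous (fun l => Bop ω (fun x => k x * FF ω l x) t) := by
  rw [continuous_iff_continuousAt]
  intro l
  set Q := ∑' j : ℕ, ((|l| + 1) * CT m T) ^ j / j.factorial
  refine intervalIntegral.continuousAt_of_dominated_interval
    (bound := fun x => |ω x * k x| * Q) ?_ ?_ ?_ ?_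
  · refine Eventually.of_forall fun l' => ?_
    exact (intervalIntegrable_iff.1
      (h.ii hT (hk.mul (FF_cont h hT0 hT l')) ht)).aestronglyMeasurable
  · have : {l' : ℝ | |l'| < |l| + 1} ∈ 𝓝 l :=
      (isOpen_lt (by fun_prop) (by fun_prop)).mem_nhds (by simp)
    filter_upwards [this] with l' hl'
    refine Eventually.of_forall fun x hx => ?_
    rw [uIoc_of_le ht.1] at hx
    rw [← mul_assoc, norm_mul]
    exact mul_le_mul_of_nonneg_left (FF_bound h hT (le_of_lt hl') ⟨hx.1.le, hx.2.trans ht.2⟩)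
      (abs_nonneg _)
  · exact (h.ii hT hk ht).abs.mul_const Q
  · refine Eventually.of_forall fun x hx => ?_
    rw [uIoc_of_le ht.1] at hx
    have := (FF_cont_l h hT0 hT (x := x) ⟨hx.1.le, hx.2.trans ht.2⟩).continuousAt (x := l)
    exact continuousAt_const.mul (continuousAt_const.mul this)

theorem g_cont (h : Wt m ω) {t : ℝ} (ht0 : 0 < t) (ht : t < 1) :
    Continuous (fun l => Bop ω (FF ω l) t) := by
  have := par_cont h ht0 ht (k := fun _ => 1) continuousOn_const (t := t) ⟨ht0.le, le_rfl⟩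
  simpa using this

theorem g_zero (h : Wt m ω) {t : ℝ} (ht0 : 0 < t) (ht : t < 1) : 0 < Bop ω (FF ω 0) t := by
  have h1 := h.ii ht (f := FF ω 0) (FF_cont h ht0 ht 0) (x := t) ⟨ht0.le, le_rfl⟩
  refine intervalIntegral.intervalIntegral_pos_of_pos_on h1 ?_ ht0
  intro x hx
  rw [FF_l0, mul_one]
  exact h.pos x ⟨hx.1, hx.2.trans ht⟩

theorem sq_pos_int (h : Wt m ω) {t : ℝ} (ht0 : 0 < t) (ht : t < 1) {F : ℝ → ℝ}
    (hF : ContinuousOn F (Icc 0 t)) (hF0 : F 0 ≠ 0) : 0 < Bop ω (fun x => F x * F x) t := by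
  have h1 : ∀ᶠ x in 𝓝[Icc 0 t] 0, F x ≠ 0 := (hF 0 ⟨le_rfl, ht0.le⟩).eventually_ne hF0
  obtain ⟨e, he, hsub⟩ : ∃ e > 0, Metric.ball 0 e ∩ Icc 0 t ⊆ {x | F x ≠ 0} :=
    Metric.mem_nhdsWithin_iff.1 h1
  set a := min (e / 2) t with ha
  have ha0 : 0 < a := lt_min (by linarith) ht0
  have hat : a ≤ t := min_le_right _ _
  have hae : a ≤ e / 2 := min_le_left _ _
  have hF2 : ContinuousOn (fun x => F x * F x) (Icc 0 t) := hF.mul hF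
  have i1 := h.ii ht hF2 (x := a) ⟨ha0.le, hat⟩
  have i2 := h.ii ht hF2 (x := t) ⟨ht0.le, le_rfl⟩
  have i3 : IntervalIntegrable (fun x => ω x * (F x * F x)) volume a t := i1.symm.trans i2
  have e1 := intervalIntegral.integral_add_adjacent_intervals i1 i3
  have p1 : 0 < ∫ x in (0:ℝ)..a, ω x * (F x * F x) := by
    refine intervalIntegral.intervalIntegral_pos_of_pos_on i1 ?_ ha0
    intro x hx
    have hne : F x ≠ 0 := hsub ⟨by
      rw [Metric.mem_ball, Real.dist_eq, sub_zero, abs_of_pos hx.1]; linarith [hx.2],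
      ⟨hx.1.le, hx.2.le.trans hat⟩⟩
    have := h.pos x ⟨hx.1, by linarith [hx.2]⟩
    have := mul_self_pos.2 hne
    positivity
  have p2 : 0 ≤ ∫ x in a..t, ω x * (F x * F x) := by
    refine intervalIntegral.integral_nonneg hat ?_
    intro x hx
    have := h.pos x ⟨by linarith [hx.1], by linarith [hx.2]⟩
    have := mul_self_nonneg (F x)
    positivity
  unfold Bop
  rw [← e1]
  linarith

theorem wronsk (h : Wt m ω) {t : ℝ} (ht0 : 0 < t) (ht : t < 1) (l l' : ℝ) :
    (l' - l) * Bop ω (fun x => FF ω l' x * FF ω l x) t =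
      -l * Bop ω (FF ω l) t * FF ω l' t + l' * Bop ω (FF ω l') t * FF ω l t := by
  have c1 := FF_cont h ht0 ht l
  have c2 := FF_cont h ht0 ht l'
  have b1 := Bop_cont h ht0.le ht c1
  have b2 := Bop_cont h ht0.le ht c2
  have hd : ∀ x ∈ Ioo 0 t, HasDerivAt
      (fun x => -l * Bop ω (FF ω l) x * FF ω l' x + l' * Bop ω (FF ω l') x * FF ω l x)
      ((l' - l) * (ω x * (FF ω l' x * FF ω l x))) x := by
    intro x hx
    have hn : Icc 0 t ∈ 𝓝 x := Icc_mem_nhds hx.1 hx.2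
    have hxI : x ∈ Icc 0 t := ⟨hx.1.le, hx.2.le⟩
    have d1 := (FF_deriv h ht0 ht l hxI).hasDerivAt hn
    have d2 := (FF_deriv h ht0 ht l' hxI).hasDerivAt hn
    have e1 := Bop_deriv h ht c1 hx
    have e2 := Bop_deriv h ht c2 hx
    have := ((e1.const_mul (-l)).mul d2).add ((e2.const_mul l').mul d1)
    refine this.congr_deriv ?_
    simp only [Aop]
    ring
  have := intervalIntegral.integral_eq_sub_of_hasDerivAt_of_le ht0.le
    (((b1.const_smul (-l)).mul c2).add ((b2.const_smul l').mul c1)) hd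
    ((h.ii ht (c2.mul c1) ⟨ht0.le, le_rfl⟩).const_mul _)
  rw [intervalIntegral.integral_const_mul] at this
  refine this.trans ?_
  simp [Bop_zero]
  ring

theorem star (h : Wt m ω) {t : ℝ} (ht0 : 0 < t) (ht : t < 1) {l' : ℝ} (hl' : 0 < l')
    (hz : Bop ω (FF ω l') t = 0) (hp : ∀ l, 0 ≤ l → l < l' → 0 < Bop ω (FF ω l) t) :
    FF ω l' t < 0 := by
  have hc := par_cont h ht0 ht (k := FF ω l') (FF_cont h ht0 ht l') (t := t) ⟨ht0.le, le_rfl⟩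
  have hpos := sq_pos_int h ht0 ht (FF_cont h ht0 ht l') (by rw [FF_zero h]; norm_num)
  have hev : ∀ᶠ l in 𝓝 l', 0 < Bop ω (fun x => FF ω l' x * FF ω l x) t :=
    hc.continuousAt.eventually (lt_mem_nhds hpos)
  have hev2 : ∀ᶠ l in 𝓝[<] l', 0 < Bop ω (fun x => FF ω l' x * FF ω l x) t ∧ l ∈ Ioo 0 l' :=
    (hev.filter_mono nhdsWithin_le_nhds).and (Ioo_mem_nhdsLT hl')
  obtain ⟨l, h1, h2⟩ := hev2.exists
  have hw := wronsk h ht0 ht l l'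
  rw [hz] at hw
  have hg := hp l h2.1.le h2.2
  by_contra hcon
  push Not at hcon
  have : 0 < (l' - l) * Bop ω (fun x => FF ω l' x * FF ω l x) t :=
    mul_pos (by linarith [h2.2]) h1
  have h3 : 0 ≤ l * Bop ω (FF ω l) t * FF ω l' t :=
    mul_nonneg (mul_nonneg h2.1.le hg.le) hcon
  linarith

end ser

theorem ivt_abs {μ : ℝ} (hμ : 0 < μ) {p q g h : ℝ → ℝ} (hp : Continuous p) (hq : Continuous q)
    (hg : Continuous g) (hh : Continuous h) (p0 : p 0 = 1) (q0 : q 0 = 1) (g0 : 0 < g 0)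
    (h0 : 0 < h 0) (gμ : g μ = 0)
    (sg : ∀ l', 0 < l' → g l' = 0 → (∀ l, 0 ≤ l → l < l' → 0 < g l) → p l' < 0)
    (sh : ∀ l', 0 < l' → h l' = 0 → (∀ l, 0 ≤ l → l < l' → 0 < h l) → q l' < 0) :
    ∃ l, 0 < l ∧ l < μ ∧ 0 < g l ∧ 0 < h l ∧ p l * h l + g l * q l = 0 := by
  have hcl : IsCompact (Icc 0 μ ∩ {l | g l ≤ 0 ∨ h l ≤ 0}) := by
    refine isCompact_Icc.inter_right ?_
    exact (isClosed_le hg continuous_const).union (isClosed_le hh continuous_const)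
  obtain ⟨l', hl', hmin⟩ := hcl.exists_isLeast ⟨μ, ⟨hμ.le, le_rfl⟩, Or.inl gμ.le⟩
  have hpos : 0 < l' := by
    rcases hl'.1.1.eq_or_lt with e | e
    · have := hl'.2
      rw [← e] at this
      rcases this with k | k <;> linarith
    · exact e
  have hbelow : ∀ l, 0 ≤ l → l < l' → 0 < g l ∧ 0 < h l := by
    intro l k1 k2
    by_contra hcon
    have : l' ≤ l := hmin ⟨⟨k1, k2.le.trans hl'.1.2⟩, by
      by_contra h3
      simp only [mem_ofPred_eq, not_or, not_le] at h3
      exact hcon h3⟩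
    linarith
  have hI : Ioo 0 l' ∈ 𝓝[<] l' := Ioo_mem_nhdsLT hpos
  have gl : 0 ≤ g l' := ge_of_tendsto (x := 𝓝[<] l') (hg.continuousAt.mono_left nhdsWithin_le_nhds)
    (by filter_upwards [hI] with l hl using (hbelow l hl.1.le hl.2).1.le)
  have hl : 0 ≤ h l' := ge_of_tendsto (x := 𝓝[<] l') (hh.continuousAt.mono_left nhdsWithin_le_nhds)
    (by filter_upwards [hI] with l hl using (hbelow l hl.1.le hl.2).2.le)
  have hW : Continuous (fun l => p l * h l + g l * q l) := by fun_prop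
  have key : ∃ l1 ∈ Ioo 0 l', p l1 * h l1 + g l1 * q l1 < 0 := by
    have fin : p l' * h l' + g l' * q l' < 0 →
        ∃ l1 ∈ Ioo 0 l', p l1 * h l1 + g l1 * q l1 < 0 := by
      intro hneg
      have : ∀ᶠ l in 𝓝[<] l', p l * h l + g l * q l < 0 :=
        (hW.continuousAt.eventually (gt_mem_nhds hneg)).filter_mono nhdsWithin_le_nhds
      obtain ⟨l, k1, k2⟩ := (this.and hI).exists
      exact ⟨l, k2, k1⟩
    rcases gl.eq_or_lt with eg | eg <;> rcases hl.eq_or_lt with eh | eh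
    · have k1 := sg l' hpos eg.symm fun l a b => (hbelow l a b).1
      have k2 := sh l' hpos eh.symm fun l a b => (hbelow l a b).2
      have e1 : ∀ᶠ l in 𝓝[<] l', p l < 0 :=
        (hp.continuousAt.eventually (gt_mem_nhds k1)).filter_mono nhdsWithin_le_nhds
      have e2 : ∀ᶠ l in 𝓝[<] l', q l < 0 :=
        (hq.continuousAt.eventually (gt_mem_nhds k2)).filter_mono nhdsWithin_le_nhds
      obtain ⟨l, k3, k4, k5⟩ := (e1.and (e2.and hI)).exists
      have k6 := hbelow l k5.1.le k5.2
      exact ⟨l, k5, by nlinarith [mul_pos k6.1 (neg_pos.2 k4), mul_pos k6.2 (neg_pos.2 k3)]⟩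
    · have k1 := sg l' hpos eg.symm fun l a b => (hbelow l a b).1
      refine fin ?_
      rw [← eg]; nlinarith
    · have k1 := sh l' hpos eh.symm fun l a b => (hbelow l a b).2
      refine fin ?_
      rw [← eh]; nlinarith
    · rcases hl'.2 with k | k <;> linarith
  obtain ⟨l1, hl1, hneg⟩ := key
  have hiv := intermediate_value_Ioo' hl1.1.le hW.continuousOn
  obtain ⟨l, k1, k2⟩ := hiv ⟨hneg, by simp only [p0, q0]; linarith⟩
  have k6 := hbelow l k1.1.le (k1.2.trans hl1.2)
  exact ⟨l, k1.1, by linarith [k1.2, hl1.2, hl'.1.2], k6.1, k6.2, k2⟩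

section sol

variable {m : ℕ} {ω : ℝ → ℝ} {T μ : ℝ} {φ φd : ℝ → ℝ}

theorem NeumannSol.cont (hs : NeumannSol ω μ φ φd) : ContinuousOn φ (Icc 0 1) :=
  fun x hx => (hs.1 x hx).continuousWithinAt

theorem NeumannSol.flux (h : Wt m ω) (hs : NeumannSol ω μ φ φd) (hT : T < 1)
    {x : ℝ} (hx : x ∈ Ioc 0 T) : ω x * φd x = -μ * Bop ω φ x := by
  have hx1 : x < 1 := by linarith [hx.2]
  have hsub : Icc 0 x ⊆ Icc (0:ℝ) 1 := Icc_subset_Icc_right hx1.le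
  have hc : ContinuousOn (fun y => ω y * φd y) (Icc 0 x) := by
    intro y hy
    rcases hy.1.eq_or_lt with e | e
    · subst e
      have h0 : φd 0 = 0 := hs.2.2.1
      rw [ContinuousWithinAt, h0, mul_zero]
      have t1 : Tendsto (fun y => CT m x * ω x * |φd y|) (𝓝[Icc 0 x] 0) (𝓝 0) := by
        have := (((hs.2.1.mono hsub) 0 hy).abs.const_mul (CT m x * ω x))
        simpa [ContinuousWithinAt, h0] using this
      refine squeeze_zero_norm' (eventually_mem_nhdsWithin.mono fun z hz => ?_) t1
      rcases hz.1.eq_or_lt with e' | e'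
      · rw [← e', h0]; simp
      · have h1 := h.bd e' hz.2 le_rfl hx1
        have h2 := h.pos z ⟨e', by linarith [hz.2]⟩
        rw [norm_mul, Real.norm_of_nonneg h2.le, Real.norm_eq_abs]
        exact mul_le_mul_of_nonneg_right h1 (abs_nonneg _)
    · exact ((h.cont ⟨e, by linarith [hy.2]⟩).continuousWithinAt).mul ((hs.2.1.mono hsub) y hy)
  have hii := h.ii hx1 (hs.cont.mono hsub) (x := x) ⟨hx.1.le, le_rfl⟩
  have := intervalIntegral.integral_eq_sub_of_hasDerivAt_of_le hx.1.le hc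
    (f' := fun y => -μ * (ω y * φ y))
    (fun y hy => (hs.2.2.2.2.2 y ⟨hy.1, by linarith [hy.2]⟩).congr_deriv (by ring))
    (hii.const_mul _)
  rw [intervalIntegral.integral_const_mul, hs.2.2.1, mul_zero, sub_zero] at this
  exact this.symm

theorem NeumannSol.dflux (h : Wt m ω) (hs : NeumannSol ω μ φ φd) (hT : T < 1)
    {x : ℝ} (hx : x ∈ Icc 0 T) : φd x = -μ * Aop ω φ x := by
  rcases hx.1.eq_or_lt with e | e
  · rw [← e, Aop_zero, hs.2.2.1]; simp
  · have h1 := hs.flux h hT ⟨e, hx.2⟩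
    have h2 := h.pos x ⟨e, by linarith [hx.2]⟩
    rw [Aop, ← mul_div_assoc, eq_div_iff h2.ne', ← h1]
    ring

theorem NeumannSol.eqF (h : Wt m ω) (hs : NeumannSol ω μ φ φd) (hT0 : 0 < T) (hT : T < 1)
    {x : ℝ} (hx : x ∈ Icc 0 T) : φ x = φ 0 * FF ω μ x := by
  have hsub : Icc 0 T ⊆ Icc (0:ℝ) 1 := Icc_subset_Icc_right hT.le
  have hφ := hs.cont.mono hsub
  have hF := FF_cont h hT0 hT μ
  have hF2 : ContinuousOn (fun x => φ 0 * FF ω μ x) (Icc 0 T) := continuousOn_const.mul hF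
  have heq : ∀ x ∈ Icc 0 T, φ x = φ 0 - μ * Kop ω φ x := by
    intro x hx
    have := intervalIntegral.integral_eq_sub_of_hasDerivAt_of_le hx.1
      (hφ.mono (Icc_subset_Icc_right hx.2)) (f' := fun y => -μ * Aop ω φ y)
      (fun y hy => by
        have hy1 : y < T := hy.2.trans_le hx.2
        rw [← hs.dflux h hT ⟨hy.1.le, hy1.le⟩]
        exact (hs.1 y ⟨hy.1.le, by linarith⟩).hasDerivAt
          (Icc_mem_nhds hy.1 (by linarith)))
      ((Aop_ii h hT hφ hx).const_mul _)
    rw [intervalIntegral.integral_const_mul] at this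
    unfold Kop
    linarith
  have := Kop_unique h hT0 hT (hφ.sub hF2) μ (fun x hx => by
    have e := Kop_sub h hT hφ hF2 hx
    have e' : Kop ω (φ - fun x => φ 0 * FF ω μ x) x = Kop ω φ x - Kop ω (fun x => φ 0 * FF ω μ x) x := e
    rw [e', Kop_smul]
    simp only [Pi.sub_apply]
    have e1 := FF_eq h hT0 hT μ hx
    have e2 := heq x hx
    linear_combination e2 - φ 0 * e1) x hx
  simp only [Pi.sub_apply] at this
  linarith

theorem NeumannSol.refl (hs : NeumannSol ω μ φ φd) :
    NeumannSol (fun x => ω (1 - x)) μ (fun x => φ (1 - x)) (fun x => -φd (1 - x)) := by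
  obtain ⟨h1, h2, h3, h4, ⟨y, hy, hy2⟩, h6⟩ := hs
  have hm : ∀ x : ℝ, x ∈ Icc (0:ℝ) 1 → 1 - x ∈ Icc (0:ℝ) 1 :=
    fun x hx => ⟨by linarith [hx.2], by linarith [hx.1]⟩
  refine ⟨?_, ?_, by simp [h4], by simp [h3], ⟨1 - y, hm y hy, by simpa using hy2⟩, ?_⟩
  · intro x hx
    have hd : HasDerivWithinAt (fun x : ℝ => 1 - x) (-1) (Icc 0 1) x :=
      ((hasDerivAt_id x).const_sub 1).hasDerivWithinAt
    have := (h1 (1 - x) (hm x hx)).scomp x hd hm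
    exact this.congr_deriv (by simp)
  · exact (h2.comp (by fun_prop) hm).neg
  · intro x hx
    have hx' : 1 - x ∈ Ioo (0:ℝ) 1 := ⟨by linarith [hx.2], by linarith [hx.1]⟩
    have := ((h6 (1 - x) hx').comp_const_sub 1 x).neg
    refine (this.congr_deriv (by ring)).congr_of_eventuallyEq (Eventually.of_forall fun y => ?_)
    simp

end sol

theorem glue_deriv {t : ℝ} (ht0 : 0 < t) (ht1 : t < 1) {f k d e : ℝ → ℝ}
    (hf : ∀ x ∈ Icc 0 t, HasDerivWithinAt f (d x) (Icc 0 t) x)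
    (hk : ∀ x ∈ Icc t 1, HasDerivWithinAt k (e x) (Icc t 1) x) (hfk : f t = k t)
    (hde : d t = e t) : ∀ x ∈ Icc (0:ℝ) 1,
    HasDerivWithinAt (fun x => if x ≤ t then f x else k x) (if x ≤ t then d x else e x)
      (Icc 0 1) x := by
  have e1 : ∀ x ∈ Icc 0 t, (if x ≤ t then f x else k x) = f x := fun x hx => if_pos hx.2
  have e2 : ∀ x ∈ Icc t 1, (if x ≤ t then f x else k x) = k x := fun x hx => by
    rcases hx.1.eq_or_lt with h | h
    · rw [← h, if_pos le_rfl, hfk]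
    · rw [if_neg (not_le.2 h)]
  intro x hx
  rcases lt_trichotomy x t with h | h | h
  · rw [if_pos h.le]
    have hx' : x ∈ Icc 0 t := ⟨hx.1, h.le⟩
    refine ((hf x hx').congr e1 (e1 x hx')).mono_of_mem_nhdsWithin ?_
    filter_upwards [self_mem_nhdsWithin, nhdsWithin_le_nhds (Iio_mem_nhds h)] with y hy hy'
    exact ⟨hy.1, le_of_lt hy'⟩
  · subst h
    rw [if_pos le_rfl, ← Icc_union_Icc_eq_Icc ht0.le ht1.le]
    have hx1 : x ∈ Icc 0 x := ⟨ht0.le, le_rfl⟩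
    have hx2 : x ∈ Icc x 1 := ⟨le_rfl, ht1.le⟩
    refine ((hf x hx1).congr e1 (e1 x hx1)).union ?_
    rw [hde]
    exact (hk x hx2).congr e2 (e2 x hx2)
  · rw [if_neg (not_le.2 h)]
    have hx' : x ∈ Icc t 1 := ⟨h.le, hx.2⟩
    refine ((hk x hx').congr e2 (e2 x hx')).mono_of_mem_nhdsWithin ?_
    filter_upwards [self_mem_nhdsWithin, nhdsWithin_le_nhds (Ioi_mem_nhds h)] with y hy hy'
    exact ⟨le_of_lt hy', hy.2⟩

theorem glue_cont {t : ℝ} (ht0 : 0 < t) (ht1 : t < 1) {f k : ℝ → ℝ}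
    (hf : ContinuousOn f (Icc 0 t)) (hk : ContinuousOn k (Icc t 1)) (hfk : f t = k t) :
    ContinuousOn (fun x => if x ≤ t then f x else k x) (Icc 0 1) := by
  rw [← Icc_union_Icc_eq_Icc ht0.le ht1.le]
  refine ContinuousOn.union_of_isClosed (hf.congr ?_) (hk.congr ?_) isClosed_Icc isClosed_Icc
  · exact fun x hx => if_pos hx.2
  · intro x hx
    rcases hx.1.eq_or_lt with h | h
    · simp only [← h, le_refl, if_true, hfk]
    · simp only [if_neg (not_le.2 h)]

/-- gluing left and right solutions -/
theorem eigen_glue {m : ℕ} {ω : ℝ → ℝ} (h : Wt m ω) {t l : ℝ} (ht0 : 0 < t) (ht1 : t < 1)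
    (hh : 0 < Bop (fun x => ω (1 - x)) (FF (fun x => ω (1 - x)) l) (1 - t))
    (hW : FF ω l t * Bop (fun x => ω (1 - x)) (FF (fun x => ω (1 - x)) l) (1 - t) +
      Bop ω (FF ω l) t * FF (fun x => ω (1 - x)) l (1 - t) = 0) :
    IsNeumannEigenvalue ω l := by
  set ω' : ℝ → ℝ := fun x => ω (1 - x) with hω'
  have h' : Wt m ω' := h.refl
  set F := FF ω l with hF
  set G := FF ω' l with hG
  set c := - Bop ω F t / Bop ω' G (1 - t) with hc
  have hωt := h.pos t ⟨ht0, ht1⟩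
  have hcB : c * Bop ω' G (1 - t) = - Bop ω F t := by rw [hc]; field_simp
  have hm1 : F t = c * G (1 - t) := by
    rw [hc]; field_simp; linarith
  have hm2 : -l * Aop ω F t = c * (l * Aop ω' G (1 - t)) := by
    have : ω' (1 - t) = ω t := by simp [hω']
    simp only [Aop, this]
    field_simp
    linear_combination l * (-hcB)
  have hmap : ∀ x ∈ Icc t 1, 1 - x ∈ Icc 0 (1 - t) :=
    fun x hx => ⟨by linarith [hx.2], by linarith [hx.1]⟩
  have hs0 : 0 < 1 - t := by linarith
  have hs1 : 1 - t < 1 := by linarith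
  -- derivative facts
  have dF : ∀ x ∈ Icc 0 t, HasDerivWithinAt F (-l * Aop ω F x) (Icc 0 t) x :=
    fun x hx => FF_deriv h ht0 ht1 l hx
  have dG : ∀ x ∈ Icc t 1, HasDerivWithinAt (fun x => c * G (1 - x))
      (c * (l * Aop ω' G (1 - x))) (Icc t 1) x := by
    intro x hx
    have hd : HasDerivWithinAt (fun x : ℝ => 1 - x) (-1) (Icc t 1) x :=
      ((hasDerivAt_id x).const_sub 1).hasDerivWithinAt
    have := ((FF_deriv h' hs0 hs1 l (hmap x hx)).scomp x hd hmap).const_mul c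
    refine this.congr_deriv ?_
    simp [hG]
  have cF := Aop_cont h ht0.le ht1 (FF_cont h ht0 ht1 l)
  have cG := Aop_cont h' hs0.le hs1 (FF_cont h' hs0 hs1 l)
  refine ⟨fun x => if x ≤ t then F x else c * G (1 - x),
    fun x => if x ≤ t then -l * Aop ω F x else c * (l * Aop ω' G (1 - x)),
    glue_deriv ht0 ht1 dF dG hm1 hm2, ?_, ?_, ?_, ⟨0, ⟨le_rfl, zero_le_one⟩, ?_⟩, ?_⟩
  · refine glue_cont ht0 ht1 (continuousOn_const.mul cF) ?_ hm2
    exact continuousOn_const.mul (continuousOn_const.mul (cG.comp (by fun_prop) hmap))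
  · simp [ht0.le, Aop_zero]
  · simp [ht1, Aop_zero]
  · simp [ht0.le, hF, FF_zero h]
  · -- flux derivative
    have gF : ∀ x ∈ Ioo 0 1, HasDerivAt (fun x => -l * Bop ω F x) (-(l * ω x * F x)) x := by
      intro x hx
      have := (Bop_deriv h (T := (x + 1) / 2) (by linarith [hx.2])
        (FF_cont h (by linarith [hx.1]) (by linarith [hx.2]) l)
        ⟨hx.1, by linarith [hx.2]⟩).const_mul (-l)
      exact this.congr_deriv (by ring)
    have gG : ∀ x ∈ Ioo 0 1, HasDerivAt (fun x => c * (l * Bop ω' G (1 - x)))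
        (-(l * ω x * (c * G (1 - x)))) x := by
      intro x hx
      have := (((Bop_deriv h' (x := 1 - x) (T := (1 - x + 1) / 2) (by linarith [hx.1])
        (FF_cont h' (by linarith [hx.2]) (by linarith [hx.1]) l)
        ⟨by linarith [hx.2], by linarith [hx.1]⟩).comp_const_sub 1 x).const_mul l).const_mul c
      refine this.congr_deriv ?_
      simp only [hω', sub_sub_cancel]
      ring
    have eF : ∀ x ∈ Ioo (0:ℝ) 1, ω x * (-l * Aop ω F x) = -l * Bop ω F x := by
      intro x hx
      have := h.pos x hx
      simp only [Aop]; field_simp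
    have eG : ∀ x ∈ Ioo (0:ℝ) 1, ω x * (c * (l * Aop ω' G (1 - x))) =
        c * (l * Bop ω' G (1 - x)) := by
      intro x hx
      have := h.pos x hx
      simp only [Aop, hω', sub_sub_cancel]; field_simp
    intro x hx
    have hI : Ioo (0:ℝ) 1 ∈ 𝓝 x := Ioo_mem_nhds hx.1 hx.2
    rcases lt_trichotomy x t with hlt | heq | hlt
    · simp only [if_pos hlt.le]
      refine (gF x hx).congr_of_eventuallyEq ?_
      filter_upwards [hI, Iio_mem_nhds hlt] with y hy hy'
      have hy2 : y ≤ t := le_of_lt hy'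
      simp only [if_pos hy2]
      exact eF y hy
    · subst heq
      simp only [le_refl, if_true]
      have g1 := gF x hx
      have g2 := gG x hx
      rw [← hm1] at g2
      have k1 : HasDerivWithinAt (fun y => ω y * if y ≤ x then -l * Aop ω F y
          else c * (l * Aop ω' G (1 - y))) (-(l * ω x * F x)) (Iic x) x := by
        refine g1.hasDerivWithinAt.congr_of_eventuallyEq ?_ ?_
        · filter_upwards [self_mem_nhdsWithin, nhdsWithin_le_nhds hI] with y hy hy'
          have hy2 : y ≤ x := hy
          simp only [if_pos hy2]
          exact eF y hy'
        · simp only [le_refl, if_true]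
          exact eF x hx
      have k2 : HasDerivWithinAt (fun y => ω y * if y ≤ x then -l * Aop ω F y
          else c * (l * Aop ω' G (1 - y))) (-(l * ω x * F x)) (Ici x) x := by
        have hxx : (ω x * if x ≤ x then -l * Aop ω F x
          else c * (l * Aop ω' G (1 - x))) = c * (l * Bop ω' G (1 - x)) := by
          simp only [le_refl, if_true]
          rw [hm2]
          exact eG x hx
        refine g2.hasDerivWithinAt.congr_of_eventuallyEq ?_ hxx
        filter_upwards [self_mem_nhdsWithin, nhdsWithin_le_nhds hI] with y hy hy'
        have hy0 : x ≤ y := hy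
        rcases hy0.eq_or_lt with hy2 | hy2
        · rw [← hy2]; exact hxx
        · simp only [if_neg (not_le.2 hy2)]
          exact eG y hy'
      have := k1.union k2
      rw [Iic_union_Ici] at this
      exact hasDerivWithinAt_univ.1 this
    · simp only [if_neg (not_le.2 hlt)]
      refine (gG x hx).congr_of_eventuallyEq ?_
      filter_upwards [hI, Ioi_mem_nhds hlt] with y hy hy'
      have hy2 : ¬ y ≤ t := not_le.2 hy'
      simp only [if_neg hy2]
      exact eG y hy

theorem no_zero {m : ℕ} {ω : ℝ → ℝ} (h : Wt m ω) {μ : ℝ} {φ φd : ℝ → ℝ}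
    (hs : NeumannSol ω μ φ φd) (hμ : 0 < μ)
    (hmin : ∀ μ', 0 < μ' → IsNeumannEigenvalue ω μ' → μ ≤ μ') (h0 : 0 < φ 0)
    {t : ℝ} (ht : t ∈ Ioo (0:ℝ) 1) : φd t ≠ 0 := by
  intro hz
  have hs0 : 0 < 1 - t := by linarith [ht.2]
  have hs1 : 1 - t < 1 := by linarith [ht.1]
  have gμ : Bop ω (FF ω μ) t = 0 := by
    have h1 := hs.flux h ht.2 (x := t) ⟨ht.1, le_rfl⟩
    rw [hz, mul_zero] at h1
    have h2 : Bop ω φ t = φ 0 * Bop ω (FF ω μ) t := by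
      unfold Bop
      rw [← intervalIntegral.integral_const_mul]
      apply intervalIntegral.integral_congr
      intro x hx
      rw [uIcc_of_le ht.1.le] at hx
      simp only
      rw [hs.eqF h ht.1 ht.2 hx]
      ring
    rw [h2] at h1
    have : μ * φ 0 ≠ 0 := (mul_pos hμ h0).ne'
    have h3 : μ * φ 0 * Bop ω (FF ω μ) t = 0 := by linarith
    exact (mul_eq_zero.1 h3).resolve_left this
  obtain ⟨l, l0, lμ, -, hh, hW⟩ := ivt_abs hμ
    (FF_cont_l h ht.1 ht.2 (x := t) ⟨ht.1.le, le_rfl⟩)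
    (FF_cont_l h.refl hs0 hs1 (x := 1 - t) ⟨hs0.le, le_rfl⟩)
    (g_cont h ht.1 ht.2) (g_cont h.refl hs0 hs1) (FF_l0 _) (FF_l0 _)
    (g_zero h ht.1 ht.2) (g_zero h.refl hs0 hs1) gμ
    (fun l' a b d => star h ht.1 ht.2 a b d) (fun l' a b d => star h.refl hs0 hs1 a b d)
  have := hmin l l0 (eigen_glue h ht.1 ht.2 hh hW)
  linarith

theorem pos_neg {m : ℕ} {ω : ℝ → ℝ} (h : Wt m ω) {μ : ℝ} {φ φd : ℝ → ℝ}
    (hs : NeumannSol ω μ φ φd) (hμ : 0 < μ) (hp : ∀ x ∈ Ioo (0:ℝ) (1/2), 0 < φ x) :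
    φd (1/2) < 0 := by
  have h1 := hs.flux h (T := 1/2) (by norm_num) (x := 1/2) ⟨by norm_num, le_rfl⟩
  have hω := h.pos (1/2) ⟨by norm_num, by norm_num⟩
  have h2 : 0 < Bop ω φ (1/2) := by
    refine intervalIntegral.intervalIntegral_pos_of_pos_on
      (h.ii (T := 1/2) (by norm_num) (hs.cont.mono (Icc_subset_Icc_right (by norm_num)))
        ⟨by norm_num, le_rfl⟩) ?_ (by norm_num)
    intro x hx
    exact mul_pos (h.pos x ⟨hx.1, by linarith [hx.2]⟩) (hp x hx)
  by_contra hcon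
  push Not at hcon
  nlinarith [mul_pos hμ h2, mul_nonneg hω.le hcon]

theorem end_bound {m : ℕ} {ω : ℝ → ℝ} (h : Wt m ω) {μ Cμ δ : ℝ} {φ φd : ℝ → ℝ}
    (hs : NeumannSol ω μ φ φd) (hμ : 0 < μ) (hC : μ ≤ Cμ) (ha : AntitoneOn φ (Icc 0 1))
    (h0 : 0 < φ 0) (hδ0 : 0 < δ) (hδ : δ < 1/2) (hδC : 2 * (Cμ * CT m (1/2) * δ) ≤ 1) :
    ∀ x ∈ Icc 0 δ, φ 0 / 2 ≤ φ x := by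
  intro x hx
  have hCp := CT_pos m (T := 1/2) (by norm_num)
  have hT : (1/2 : ℝ) < 1 := by norm_num
  have hφ : ContinuousOn φ (Icc 0 (1/2)) := hs.cont.mono (Icc_subset_Icc_right (by norm_num))
  set A := Cμ * CT m (1/2) * δ * φ 0 with hA
  have hd : ∀ y ∈ Ioo 0 δ, -A ≤ φd y := by
    intro y hy
    have hyT : y ≤ 1/2 := by linarith [hy.2]
    have hωy := h.pos y ⟨hy.1, by linarith⟩
    have e1 := hs.flux h hT ⟨hy.1, hyT⟩
    have e2 : Bop ω φ y ≤ ∫ r in (0:ℝ)..y, CT m (1/2) * ω y * φ 0 := by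
      refine intervalIntegral.integral_mono_on_of_le_Ioo hy.1.le
        (h.ii hT hφ ⟨hy.1.le, hyT⟩) (by simp) ?_
      intro r hr
      have k1 := h.bd hr.1 hr.2.le hyT hT
      have k2 := h.pos r ⟨hr.1, by linarith [hr.2]⟩
      have k3 : φ r ≤ φ 0 := ha ⟨le_rfl, zero_le_one⟩ ⟨hr.1.le, by linarith [hr.2]⟩ hr.1.le
      exact (mul_le_mul_of_nonneg_left k3 k2.le).trans (mul_le_mul_of_nonneg_right k1 h0.le)
    rw [intervalIntegral.integral_const, sub_zero, smul_eq_mul] at e2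
    have e3 : μ * Bop ω φ y ≤ ω y * A := by
      have k : y * (CT m (1/2) * ω y * φ 0) ≤ δ * (CT m (1/2) * ω y * φ 0) :=
        mul_le_mul_of_nonneg_right hy.2.le (by positivity)
      have k' : 0 ≤ δ * (CT m (1/2) * ω y * φ 0) := by positivity
      calc μ * Bop ω φ y ≤ μ * (δ * (CT m (1/2) * ω y * φ 0)) :=
            mul_le_mul_of_nonneg_left (e2.trans k) hμ.le
        _ ≤ Cμ * (δ * (CT m (1/2) * ω y * φ 0)) := mul_le_mul_of_nonneg_right hC k'
        _ = _ := by rw [hA]; ring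
    have e4 : ω y * (-A) ≤ ω y * φd y := by linarith
    exact le_of_mul_le_mul_left e4 hωy
  have hder : ∀ y ∈ Ioo 0 δ, HasDerivAt φ (φd y) y := fun y hy =>
    (hs.1 y ⟨hy.1.le, by linarith [hy.2]⟩).hasDerivAt (Icc_mem_nhds hy.1 (by linarith [hy.2]))
  have key := (convex_Icc 0 δ).mul_sub_le_image_sub_of_le_deriv
    (hφ.mono (Icc_subset_Icc_right hδ.le))
    (by rw [interior_Icc]; exact fun y hy => (hder y hy).differentiableAt.differentiableWithinAt)
    (C := -A) (by rw [interior_Icc]; intro y hy; rw [(hder y hy).deriv]; exact hd y hy)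
    0 ⟨le_rfl, hδ0.le⟩ x hx hx.1
  have hA2 : A ≤ φ 0 / 2 := by rw [hA]; nlinarith
  have hA0 : 0 ≤ A := by
    have : 0 < Cμ := by linarith
    positivity
  have : A * x ≤ A := mul_le_of_le_one_right hA0 (by linarith [hx.2])
  linarith

theorem strict_neg {m : ℕ} {ω : ℝ → ℝ} (h : Wt m ω) {μ : ℝ} {φ φd : ℝ → ℝ}
    (hs : NeumannSol ω μ φ φd) (hμ : 0 < μ)
    (hmin : ∀ μ', 0 < μ' → IsNeumannEigenvalue ω μ' → μ ≤ μ') (h0 : 0 < φ 0) :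
    StrictAntiOn φ (Icc 0 1) ∧ φ 1 < 0 := by
  have hder : ∀ y ∈ Ioo (0:ℝ) 1, HasDerivAt φ (φd y) y := fun y hy =>
    (hs.1 y ⟨hy.1.le, hy.2.le⟩).hasDerivAt (Icc_mem_nhds hy.1 hy.2)
  have hcd : ContinuousOn φd (Ioo 0 1) := hs.2.1.mono Ioo_subset_Icc_self
  have hnz : ∀ t ∈ Ioo (0:ℝ) 1, φd t ≠ 0 := fun t ht => no_zero h hs hμ hmin h0 ht
  have hhalf : (1/2 : ℝ) ∈ Ioo (0:ℝ) 1 := ⟨by norm_num, by norm_num⟩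
  have hneg : ∀ t ∈ Ioo (0:ℝ) 1, φd t < 0 := by
    by_contra hcon
    push Not at hcon
    obtain ⟨t, ht, htp⟩ := hcon
    have hall : ∀ s ∈ Ioo (0:ℝ) 1, 0 < φd s := by
      intro s hs'
      by_contra hc2
      push Not at hc2
      obtain ⟨z, hz, hz0⟩ := isPreconnected_Ioo.intermediate_value hs' ht hcd ⟨hc2, htp⟩
      exact hnz z hz hz0
    have hmono : StrictMonoOn φ (Icc 0 1) := strictMonoOn_of_deriv_pos (convex_Icc 0 1) hs.cont
      (by rw [interior_Icc]; intro y hy; rw [(hder y hy).deriv]; exact hall y hy)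
    have := pos_neg h hs hμ (fun x hx => h0.trans
      (hmono ⟨le_rfl, zero_le_one⟩ ⟨hx.1.le, by linarith [hx.2]⟩ hx.1))
    linarith [hall _ hhalf]
  have hanti : StrictAntiOn φ (Icc 0 1) := strictAntiOn_of_deriv_neg (convex_Icc 0 1) hs.cont
      (by rw [interior_Icc]; intro y hy; rw [(hder y hy).deriv]; exact hneg y hy)
  refine ⟨hanti, ?_⟩
  by_contra hcon
  push Not at hcon
  have := pos_neg h.refl hs.refl hμ (fun x hx => hcon.trans_lt
    (hanti (a := 1 - x) (b := 1) ⟨by linarith [hx.2], by linarith [hx.1]⟩ ⟨zero_le_one, le_rfl⟩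
      (by linarith [hx.1])))
  have h2 := hneg _ hhalf
  norm_num at this h2
  linarith

theorem mkPt_comb (m : ℕ) (a b x t : ℝ) (y z : EuclideanSpace ℝ (Fin m)) :
    a • mkPt m x y + b • mkPt m t z = mkPt m (a * x + b * t) (a • y + b • z) := by
  ext i
  refine Fin.cases ?_ (fun j => ?_) i <;> simp [mkPt]

theorem mkPt_cont (m : ℕ) (x : ℝ) : Continuous (mkPt m x) := by
  unfold mkPt
  refine (EuclideanSpace.equiv (Fin (m+1)) ℝ).symm.continuous.comp ?_
  refine continuous_pi fun i => ?_
  refine Fin.cases ?_ (fun j => ?_) i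
  · simp; fun_prop
  · simp; fun_prop

theorem mkPt_norm (m : ℕ) (x : ℝ) (y : EuclideanSpace ℝ (Fin m)) : ‖y‖ ≤ ‖mkPt m x y‖ := by
  rw [EuclideanSpace.norm_eq, EuclideanSpace.norm_eq]
  apply Real.sqrt_le_sqrt
  rw [Fin.sum_univ_succ]
  simp [mkPt]
  positivity

theorem wt_omega (m : ℕ) (Ω : Set (EuclideanSpace ℝ (Fin (m+1)))) (ho : IsOpen Ω)
    (hc : Convex ℝ Ω) (hb : Bornology.IsBounded Ω)
    (hne : ∀ s ∈ Ioo (0:ℝ) 1, (cross Ω s).Nonempty) : Wt m (ωvol Ω) := by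
  have hop : ∀ s, IsOpen (cross Ω s) := fun s => ho.preimage (mkPt_cont m s)
  have hfin : ∀ s, volume (cross Ω s) ≠ ⊤ := by
    intro s
    obtain ⟨R, hR⟩ := hb.exists_norm_le
    have : Bornology.IsBounded (cross Ω s) :=
      isBounded_iff_forall_norm_le.2 ⟨R, fun y hy => (mkPt_norm m s y).trans (hR _ hy)⟩
    exact this.measure_lt_top.ne
  refine ⟨fun s hs => ?_, ?_⟩
  · exact ENNReal.toReal_pos ((hop s).measure_pos volume (hne s hs)).ne' (hfin s)
  · intro x hx t ht θ h0 h1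
    obtain ⟨z, hz⟩ := hne t ht
    have hsub : AffineMap.homothety z (1 - θ) '' cross Ω x ⊆
        cross Ω ((1 - θ) * x + θ * t) := by
      rintro _ ⟨y, hy, rfl⟩
      have k : AffineMap.homothety z (1 - θ) y = (1 - θ) • y + θ • z := by
        rw [AffineMap.homothety_apply]
        simp only [vsub_eq_sub, vadd_eq_add]
        module
      rw [k]
      have := hc hy hz (by linarith : 0 ≤ 1 - θ) h0 (by ring)
      rw [mkPt_comb] at this
      exact this
    have h2 := measure_mono (μ := volume) hsub
    rw [Measure.addHaar_image_homothety] at h2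
    have h3 := ENNReal.toReal_mono (hfin _) h2
    rw [ENNReal.toReal_mul, ENNReal.toReal_ofReal (abs_nonneg _), finrank_euclideanSpace_fin,
      abs_of_nonneg (pow_nonneg (by linarith) _)] at h3
    exact h3

/-- The first ODE eigenfunction `φ` is nonincreasing on `[0,1]`, stays
`≥ φ(0)/2` on `[0, δ₁]` and `≤ φ(1)/2` on `[1-δ₁, 1]` for a constant `δ₁`; in particular
any zero `s₁` of `φ` satisfies `δ₁ < s₁ < 1 - δ₁`. -/
theorem ode_eigenfunction_monotone_and_ends
    (m : ℕ) (hm : 1 ≤ m) (cμ Cμ : ℝ) (hcμ : 0 < cμ) (hCμ : cμ ≤ Cμ) :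
    ∃ δ₁ > (0:ℝ), δ₁ < 1/2 ∧
    ∀ (Ω : Set (EuclideanSpace ℝ (Fin (m+1)))) (φ φd : ℝ → ℝ) (μ : ℝ),
      IsOpen Ω → Convex ℝ Ω → Bornology.IsBounded Ω →
      -- Ω ⊆ (0,1) × ℝ^{n-1}
      (∀ x y, mkPt m x y ∈ Ω → x ∈ Ioo (0:ℝ) 1) →
      -- nonempty cross-sections
      (∀ s ∈ Ioo (0:ℝ) 1, (cross Ω s).Nonempty) →
      -- φ is a first Neumann eigenfunction of -(ωφ')' = μωφ, with φ(0) > 0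
      NeumannSol (ωvol Ω) μ φ φd →
      0 < μ →
      (∀ μ', 0 < μ' → IsNeumannEigenvalue (ωvol Ω) μ' → μ ≤ μ') →
      (∫ x in (0:ℝ)..1, ωvol Ω x * φ x) = 0 →
      0 < φ 0 →
      -- uniform bounds on μ, assumed as hypotheses
      cμ ≤ μ → μ ≤ Cμ →
      AntitoneOn φ (Icc 0 1) ∧
      (∀ x ∈ Icc (0:ℝ) δ₁, φ 0 / 2 ≤ φ x) ∧
      (∀ x ∈ Icc (1 - δ₁) (1:ℝ), φ x ≤ φ 1 / 2) ∧
      (∀ s₁ ∈ Icc (0:ℝ) 1, φ s₁ = 0 → δ₁ < s₁ ∧ s₁ < 1 - δ₁) := by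
  have hCT := CT_pos m (T := 1/2) (by norm_num)
  have hCp : 0 < Cμ := by linarith
  have hP : 0 < Cμ * CT m (1/2) := mul_pos hCp hCT
  have hden : 0 < 4 + 2 * (Cμ * CT m (1/2)) := by linarith
  refine ⟨1 / (4 + 2 * (Cμ * CT m (1/2))), by positivity, ?_, ?_⟩
  · rw [div_lt_div_iff₀ hden (by norm_num)]; linarith
  intro Ω φ φd μ ho hc hb _ hne hs hμ hmin _ h0 _ hC
  set δ := 1 / (4 + 2 * (Cμ * CT m (1/2))) with hδ
  have hδ0 : 0 < δ := by positivity
  have hδ1 : δ < 1/2 := by rw [hδ, div_lt_div_iff₀ hden (by norm_num)]; linarith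
  have hδC : 2 * (Cμ * CT m (1/2) * δ) ≤ 1 := by
    have : δ * (4 + 2 * (Cμ * CT m (1/2))) = 1 := by rw [hδ]; field_simp
    nlinarith
  have hw := wt_omega m Ω ho hc hb hne
  obtain ⟨hsa, h1⟩ := strict_neg hw hs hμ hmin h0
  have ha := hsa.antitoneOn
  have left := end_bound hw hs hμ hC ha h0 hδ0 hδ1 hδC
  have hs' : NeumannSol (fun x => ωvol Ω (1 - x)) μ (fun x => -φ (1 - x))
      (fun x => φd (1 - x)) := by
    obtain ⟨a1, a2, a3, a4, ⟨y, hy, hy2⟩, a6⟩ := hs.refl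
    refine ⟨fun x hx => ?_, ?_, by simpa using a3, by simpa using a4,
      ⟨y, hy, neg_ne_zero.2 hy2⟩, fun x hx => ?_⟩
    · exact (a1 x hx).neg.congr_deriv (by simp)
    · refine a2.neg.congr fun x hx => ?_
      simp
    · refine ((a6 x hx).neg.congr_deriv (by ring)).congr_of_eventuallyEq
        (Eventually.of_forall fun y => ?_)
      simp
  have right := end_bound hw.refl hs' hμ hC (by
      intro x hx y hy hxy
      have := ha (a := 1 - y) (b := 1 - x) ⟨by linarith [hy.2], by linarith [hy.1]⟩
        ⟨by linarith [hx.2], by linarith [hx.1]⟩ (by linarith)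
      simpa using this) (by simpa using h1) hδ0 hδ1 hδC
  have right' : ∀ x ∈ Icc (1 - δ) (1:ℝ), φ x ≤ φ 1 / 2 := by
    intro x hx
    have := right (1 - x) ⟨by linarith [hx.2], by linarith [hx.1]⟩
    simp only [sub_sub_cancel, sub_zero] at this
    linarith
  refine ⟨ha, left, right', ?_⟩
  intro s hsI hz
  constructor
  · by_contra hcon
    push Not at hcon
    have := left s ⟨hsI.1, hcon⟩
    linarith
  · by_contra hcon
    push Not at hcon
    have := right' s ⟨hcon, hsI.2⟩
    linarith
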